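/- Let n≥4 be an integer and 0≤β<n−3, and let F∈C^n(ℝ,r^β). Then for every t∈(0,∞) and x∈ℝ the limit Ψ(t,x) := (1/(2√(iπt))) · lim_{ε→0⁺} ∫_ℝ e^{−εy²} e^{i(y−x)²/(4t)} F(y) dy exists (where √(iπt) denotes the principal square root), the function Ψ belongs to AC_{1,2}((0,∞)×ℝ), it satisfies the free Schrödinger equation i·∂Ψ/∂t(t,x) = −∂²Ψ/∂x²(t,x) for a.e. t∈(0,∞) and all x∈ℝ, and lim_{t→0⁺} Ψ(t,x) = F(x) for every x∈ℝ. -/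

import Mathlib

open Set Filter MeasureTheory Topology

noncomputable section

/-- Membership in the space `C^n(ℝ, r^α)` with `r(y) = 1 + |y|`: `f` is `n`-times continuously
differentiable on `ℝ` and all derivatives up to order `n` satisfy a bound `M·(1+|y|)^α`. -/
def MemCnR (n : ℕ) (α : ℝ) (f : ℝ → ℂ) : Prop :=
  ContDiff ℝ n f ∧
    ∃ M : ℝ, 0 ≤ M ∧ ∀ k ≤ n, ∀ y : ℝ, ‖iteratedDeriv k f y‖ ≤ M * (1 + |y|) ^ α

/-- The norm on the space `C^n(ℝ, r^α)`. -/
def CnRNorm (n : ℕ) (α : ℝ) (f : ℝ → ℂ) : ℝ :=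
  ⨆ k : Fin (n + 1), ⨆ y : ℝ, ‖iteratedDeriv (k : ℕ) f y‖ / (1 + |y|) ^ α

/-- Absolute continuity of `g` on a set `I ⊆ ℝ`: `g` is an indefinite integral of a locally
integrable function `h` on `I`. -/
def IsACOn {E : Type*} [NormedAddCommGroup E] [NormedSpace ℝ E] (I : Set ℝ) (g : ℝ → E) : Prop :=
  ∃ h : ℝ → E, MeasureTheory.LocallyIntegrableOn h I ∧
    ∀ s₁ ∈ I, ∀ s₂ ∈ I, s₁ < s₂ → g s₂ - g s₁ = ∫ s in s₁..s₂, h s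

/-- The space `AC_{1,2}(S × ℝ)`: `Ψ(·,x)` is absolutely continuous on the time set `S` for every
`x`, and `Ψ(t,·)`, `∂Ψ/∂x(t,·)` are absolutely continuous on `ℝ` for every `t ∈ S`. -/
def MemAC12 (S : Set ℝ) (Ψ : ℝ → ℝ → ℂ) : Prop :=
  (∀ x : ℝ, IsACOn S (fun t => Ψ t x)) ∧
    ∀ t ∈ S, IsACOn Set.univ (Ψ t) ∧ IsACOn Set.univ (deriv (Ψ t))

/-!
With `w = (y - x) / √t` the integral becomes `√t ∫ e^{iw²/4} F(x + √t w) dw`, whose phase no longer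
depends on `t` and `x`. For `h = g / (w + i)` one has
`e^{iw²/4} g = -2i (e^{iw²/4} h)' + e^{iw²/4} · i (h + 2h')`,
so integrating by parts trades one derivative of `g` for one power of decay. After `m > β + 1` such
steps the integral converges absolutely and, by dominated convergence, is continuous under bounded
pointwise convergence of `g` together with its first `m` derivatives. Applied to Gaussian cutoffs
this gives the existence of the limit; applied to the functions `F(x + √t w)`, the initial
condition; applied to difference quotients, the derivatives in `x` and `√t`. The derivative in `√t`
is the integral of `w F'(x + √t w)`, and since `e^{iw²/4} w = -2i (e^{iw²/4})'` a last integration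
by parts turns it into `2i√t` times the integral of `F''(x + √t w)`, which is the Schrödinger
equation.
-/

/-! ### Bounds and convergence in the weighted spaces -/

/-- Quantitative form of membership in `C^n(ℝ, r^α)`: all derivatives of `f` up to order `n` are
bounded by `M·(1+|y|)^α` with an explicit constant `M`. -/
structure CnRBound (n : ℕ) (α M : ℝ) (f : ℝ → ℂ) : Prop where
  contDiff : ContDiff ℝ n f
  norm_le : ∀ k ≤ n, ∀ y : ℝ, ‖iteratedDeriv k f y‖ ≤ M * (1 + |y|) ^ α

lemma one_add_abs_rpow_nonneg (α y : ℝ) : 0 ≤ (1 + |y|) ^ α := by positivity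

lemma one_add_abs_rpow_le {α γ : ℝ} (h : α ≤ γ) (y : ℝ) : (1 + |y|) ^ α ≤ (1 + |y|) ^ γ :=
  Real.rpow_le_rpow_of_exponent_le (by linarith [abs_nonneg y]) h

lemma one_add_abs_rpow_add (α γ y : ℝ) :
    (1 + |y|) ^ (α + γ) = (1 + |y|) ^ α * (1 + |y|) ^ γ :=
  Real.rpow_add (by positivity) _ _

lemma one_add_abs_affine_rpow_le {α R x s : ℝ} (hα : 0 ≤ α) (hR : 1 ≤ R) (hx : |x| ≤ R)
    (hs : |s| ≤ R) (w : ℝ) : (1 + |x + s * w|) ^ α ≤ (2 * R) ^ α * (1 + |w|) ^ α := by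
  rw [← Real.mul_rpow (by positivity) (by positivity)]
  refine Real.rpow_le_rpow (by positivity) ?_ hα
  have habs : |x + s * w| ≤ |x| + |s| * |w| := (abs_add_le _ _).trans_eq (by rw [abs_mul])
  nlinarith [abs_nonneg w]

lemma iteratedDeriv_comp_affine {E : Type*} [NormedAddCommGroup E] [NormedSpace ℝ E] {n k : ℕ}
    {f : ℝ → E} (hf : ContDiff ℝ n f) (hk : k ≤ n) (x s w : ℝ) :
    iteratedDeriv k (fun w => f (x + s * w)) w = s ^ k • iteratedDeriv k f (x + s * w) := by
  have hshift : ContDiff ℝ k fun y => f (x + y) :=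
    (hf.of_le (by exact_mod_cast hk)).comp (contDiff_const.add contDiff_id)
  rw [congrFun (iteratedDeriv_comp_const_smul hshift s) w, iteratedDeriv_comp_const_add]

namespace CnRBound

variable {n : ℕ} {α γ M N : ℝ} {f g : ℝ → ℂ}

lemma nonneg (hf : CnRBound n α M f) : 0 ≤ M := by
  simpa using (norm_nonneg _).trans (hf.norm_le 0 n.zero_le 0)

lemma memCnR (hf : CnRBound n α M f) : MemCnR n α f :=
  ⟨hf.contDiff, M, hf.nonneg, hf.norm_le⟩

lemma of_le {m : ℕ} (hf : CnRBound n α M f) (h : m ≤ n) : CnRBound m α M f :=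
  ⟨hf.contDiff.of_le (by exact_mod_cast h), fun k hk => hf.norm_le k (hk.trans h)⟩

protected lemma deriv (hf : CnRBound (n + 1) α M f) : CnRBound n α M (deriv f) where
  contDiff := by simpa using hf.contDiff.iterate_deriv' n 1
  norm_le k hk := by
    simpa only [iteratedDeriv_succ'] using hf.norm_le (k + 1) (Nat.succ_le_succ hk)

lemma add (hf : CnRBound n α M f) (hg : CnRBound n α N g) :
    CnRBound n α (M + N) fun y => f y + g y where
  contDiff := hf.contDiff.add hg.contDiff
  norm_le k hk y := by
    have hk' : (k : WithTop ℕ∞) ≤ n := by exact_mod_cast hk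
    rw [iteratedDeriv_fun_add (hf.contDiff.of_le hk').contDiffAt
      (hg.contDiff.of_le hk').contDiffAt, add_mul]
    exact norm_add_le_of_le (hf.norm_le k hk y) (hg.norm_le k hk y)

lemma const_mul (c : ℂ) (hf : CnRBound n α M f) : CnRBound n α (‖c‖ * M) fun y => c * f y where
  contDiff := contDiff_const.mul hf.contDiff
  norm_le k hk y := by
    rw [iteratedDeriv_const_mul_field, norm_mul, mul_assoc]
    exact mul_le_mul_of_nonneg_left (hf.norm_le k hk y) (norm_nonneg c)

lemma mul (hf : CnRBound n α M f) (hg : CnRBound n γ N g) :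
    CnRBound n (α + γ) (2 ^ n * (M * N)) fun y => f y * g y where
  contDiff := hf.contDiff.mul hg.contDiff
  norm_le k hk y := by
    have hk' : (k : WithTop ℕ∞) ≤ n := by exact_mod_cast hk
    have hM := hf.nonneg
    have hN := hg.nonneg
    have hterm : ∀ i ∈ Finset.range (k + 1),
        ‖(k.choose i : ℂ) * iteratedDeriv i f y * iteratedDeriv (k - i) g y‖ ≤
          k.choose i * (M * N * (1 + |y|) ^ (α + γ)) := fun i hi => by
      rw [norm_mul, norm_mul, Complex.norm_natCast, mul_assoc, one_add_abs_rpow_add]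
      refine mul_le_mul_of_nonneg_left ?_ (Nat.cast_nonneg _)
      refine (mul_le_mul (hf.norm_le i ((Finset.mem_range_succ_iff.1 hi).trans hk) y)
        (hg.norm_le (k - i) ((k.sub_le i).trans hk) y) (norm_nonneg _) (by positivity)).trans_eq ?_
      ring
    calc ‖iteratedDeriv k (fun y => f y * g y) y‖
        ≤ ∑ i ∈ Finset.range (k + 1), (k.choose i : ℝ) * (M * N * (1 + |y|) ^ (α + γ)) := by
          rw [iteratedDeriv_fun_mul (hf.contDiff.of_le hk').contDiffAt
            (hg.contDiff.of_le hk').contDiffAt]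
          exact norm_sum_le_of_le _ hterm
      _ = 2 ^ k * (M * N * (1 + |y|) ^ (α + γ)) := by
          rw [← Finset.sum_mul]
          exact_mod_cast congrArg (fun a : ℕ => (a : ℝ) * _) (Nat.sum_range_choose k)
      _ ≤ 2 ^ n * (M * N) * (1 + |y|) ^ (α + γ) := by
          rw [mul_assoc (2 ^ n)]
          gcongr
          norm_num

lemma comp_affine {R x s : ℝ} (hf : CnRBound n α M f) (hα : 0 ≤ α) (hR : 1 ≤ R)
    (hx : |x| ≤ R) (hs : |s| ≤ R) :
    CnRBound n α (R ^ n * (M * (2 * R) ^ α)) fun w => f (x + s * w) where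
  contDiff := hf.contDiff.comp (contDiff_const.add (contDiff_const.mul contDiff_id))
  norm_le k hk w := by
    have hM := hf.nonneg
    have hpow : |s| ^ k ≤ R ^ n :=
      (pow_le_pow_left₀ (abs_nonneg s) hs k).trans (pow_le_pow_right₀ hR hk)
    have hbound : ‖iteratedDeriv k f (x + s * w)‖ ≤ M * ((2 * R) ^ α * (1 + |w|) ^ α) :=
      (hf.norm_le k hk _).trans
        (mul_le_mul_of_nonneg_left (one_add_abs_affine_rpow_le hα hR hx hs w) hM)
    rw [iteratedDeriv_comp_affine hf.contDiff hk, norm_smul, norm_pow, Real.norm_eq_abs]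
    exact (mul_le_mul hpow hbound (norm_nonneg _) (by positivity)).trans_eq (by ring)

end CnRBound

lemma MemCnR.exists_bound {n : ℕ} {α : ℝ} {f : ℝ → ℂ} (hf : MemCnR n α f) :
    ∃ M, CnRBound n α M f :=
  let ⟨hcont, M, _, hM⟩ := hf
  ⟨M, hcont, hM⟩

/-- Bounded pointwise convergence in `C^n(ℝ, r^α)`: along `l`, the functions `g i` are eventually
bounded in `C^n(ℝ, r^α)`, and their derivatives up to order `n` converge pointwise to those of
`g₀`. This is the convergence under which dominated convergence applies to oscillatory
integrals. -/
structure TendstoCnR {ι : Type*} (n : ℕ) (α : ℝ) (g : ι → ℝ → ℂ) (l : Filter ι)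
    (g₀ : ℝ → ℂ) : Prop where
  contDiff : ContDiff ℝ n g₀
  exists_bound : ∃ M, ∀ᶠ i in l, CnRBound n α M (g i)
  tendsto : ∀ k ≤ n, ∀ y : ℝ,
    Tendsto (fun i => iteratedDeriv k (g i) y) l (𝓝 (iteratedDeriv k g₀ y))

namespace TendstoCnR

variable {ι : Type*} {l : Filter ι} {n : ℕ} {α γ : ℝ} {f g : ι → ℝ → ℂ} {f₀ g₀ : ℝ → ℂ}

lemma memCnR [l.NeBot] (hg : TendstoCnR n α g l g₀) : MemCnR n α g₀ := by
  obtain ⟨M, hM⟩ := hg.exists_bound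
  refine CnRBound.memCnR (M := M) ⟨hg.contDiff, fun k hk y => ?_⟩
  exact le_of_tendsto (hg.tendsto k hk y).norm (hM.mono fun i hi => hi.norm_le k hk y)

lemma of_le {m : ℕ} (hg : TendstoCnR n α g l g₀) (h : m ≤ n) : TendstoCnR m α g l g₀ where
  contDiff := hg.contDiff.of_le (by exact_mod_cast h)
  exists_bound := hg.exists_bound.imp fun _ hM => hM.mono fun _ hi => hi.of_le h
  tendsto k hk := hg.tendsto k (hk.trans h)

protected lemma deriv (hg : TendstoCnR (n + 1) α g l g₀) :
    TendstoCnR n α (fun i => deriv (g i)) l (deriv g₀) where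
  contDiff := by simpa using hg.contDiff.iterate_deriv' n 1
  exists_bound := hg.exists_bound.imp fun _ hM => hM.mono fun _ hi => hi.deriv
  tendsto k hk := by
    simpa only [iteratedDeriv_succ'] using hg.tendsto (k + 1) (Nat.succ_le_succ hk)

lemma add (hf : TendstoCnR n α f l f₀) (hg : TendstoCnR n α g l g₀) :
    TendstoCnR n α (fun i y => f i y + g i y) l fun y => f₀ y + g₀ y := by
  obtain ⟨A, hA⟩ := hf.exists_bound
  obtain ⟨B, hB⟩ := hg.exists_bound
  refine ⟨hf.contDiff.add hg.contDiff,
    ⟨A + B, (hA.and hB).mono fun i hi => hi.1.add hi.2⟩, fun k hk y => ?_⟩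
  have hk' : (k : WithTop ℕ∞) ≤ n := by exact_mod_cast hk
  rw [iteratedDeriv_fun_add (hf.contDiff.of_le hk').contDiffAt
    (hg.contDiff.of_le hk').contDiffAt]
  refine ((hf.tendsto k hk y).add (hg.tendsto k hk y)).congr' ?_
  filter_upwards [hA, hB] with i hfi hgi
  rw [iteratedDeriv_fun_add (hfi.contDiff.of_le hk').contDiffAt
    (hgi.contDiff.of_le hk').contDiffAt]

lemma const_mul (c : ℂ) (hg : TendstoCnR n α g l g₀) :
    TendstoCnR n α (fun i y => c * g i y) l fun y => c * g₀ y where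
  contDiff := contDiff_const.mul hg.contDiff
  exists_bound :=
    let ⟨M, hM⟩ := hg.exists_bound
    ⟨‖c‖ * M, hM.mono fun _ hi => hi.const_mul c⟩
  tendsto k hk y := by
    simpa only [iteratedDeriv_const_mul_field] using (hg.tendsto k hk y).const_mul c

lemma mul (hf : TendstoCnR n α f l f₀) (hg : TendstoCnR n γ g l g₀) :
    TendstoCnR n (α + γ) (fun i y => f i y * g i y) l fun y => f₀ y * g₀ y := by
  obtain ⟨A, hA⟩ := hf.exists_bound
  obtain ⟨B, hB⟩ := hg.exists_bound
  refine ⟨hf.contDiff.mul hg.contDiff,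
    ⟨2 ^ n * (A * B), (hA.and hB).mono fun i hi => hi.1.mul hi.2⟩, fun k hk y => ?_⟩
  have hk' : (k : WithTop ℕ∞) ≤ n := by exact_mod_cast hk
  rw [iteratedDeriv_fun_mul (hf.contDiff.of_le hk').contDiffAt
    (hg.contDiff.of_le hk').contDiffAt]
  have hLeibniz : Tendsto (fun i => ∑ j ∈ Finset.range (k + 1),
      (k.choose j : ℂ) * iteratedDeriv j (f i) y * iteratedDeriv (k - j) (g i) y) l
      (𝓝 (∑ j ∈ Finset.range (k + 1),
        (k.choose j : ℂ) * iteratedDeriv j f₀ y * iteratedDeriv (k - j) g₀ y)) :=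
    tendsto_finsetSum _ fun j hj =>
      ((hf.tendsto j ((Finset.mem_range_succ_iff.1 hj).trans hk) y).const_mul _).mul
        (hg.tendsto (k - j) ((k.sub_le j).trans hk) y)
  refine hLeibniz.congr' ?_
  filter_upwards [hA, hB] with i hfi hgi
  rw [iteratedDeriv_fun_mul (hfi.contDiff.of_le hk').contDiffAt
    (hgi.contDiff.of_le hk').contDiffAt]

end TendstoCnR

namespace MemCnR

variable {ι : Type*} {l : Filter ι} {n : ℕ} {α γ : ℝ} {f g : ℝ → ℂ}

lemma tendstoCnR_const (l : Filter ι) (hf : MemCnR n α f) : TendstoCnR n α (fun _ => f) l f where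
  contDiff := hf.1
  exists_bound := hf.exists_bound.imp fun _ hM => Eventually.of_forall fun _ => hM
  tendsto _ _ _ := tendsto_const_nhds

-- A single function is a constant family, so the algebra of `TendstoCnR` carries over.
lemma of_le {m : ℕ} (hf : MemCnR n α f) (h : m ≤ n) : MemCnR m α f :=
  ((hf.tendstoCnR_const (pure ())).of_le h).memCnR

protected lemma deriv (hf : MemCnR (n + 1) α f) : MemCnR n α (deriv f) :=
  (hf.tendstoCnR_const (pure ())).deriv.memCnR

lemma add (hf : MemCnR n α f) (hg : MemCnR n α g) : MemCnR n α fun y => f y + g y :=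
  ((hf.tendstoCnR_const (pure ())).add (hg.tendstoCnR_const (pure ()))).memCnR

lemma const_mul (c : ℂ) (hf : MemCnR n α f) : MemCnR n α fun y => c * f y :=
  ((hf.tendstoCnR_const (pure ())).const_mul c).memCnR

lemma mul (hf : MemCnR n α f) (hg : MemCnR n γ g) : MemCnR n (α + γ) fun y => f y * g y :=
  ((hf.tendstoCnR_const (pure ())).mul (hg.tendstoCnR_const (pure ()))).memCnR

lemma differentiable (hf : MemCnR (n + 1) α f) : Differentiable ℝ f :=
  hf.1.differentiable (by simp)

lemma mono (hf : MemCnR n α f) (h : α ≤ γ) : MemCnR n γ f :=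
  let ⟨hcont, M, hM0, hM⟩ := hf
  ⟨hcont, M, hM0, fun k hk y => (hM k hk y).trans
    (mul_le_mul_of_nonneg_left (one_add_abs_rpow_le h y) hM0)⟩

lemma tendstoCnR_comp_affine {x s : ι → ℝ} {x₀ s₀ : ℝ} (hf : MemCnR n α f) (hα : 0 ≤ α)
    (hx : Tendsto x l (𝓝 x₀)) (hs : Tendsto s l (𝓝 s₀)) :
    TendstoCnR n α (fun i w => f (x i + s i * w)) l fun w => f (x₀ + s₀ * w) := by
  obtain ⟨M, hM⟩ := hf.exists_bound
  set R := max |x₀| |s₀| + 1 with hR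
  have hR1 : 1 ≤ R := by simp [hR]
  refine ⟨hf.1.comp (contDiff_const.add (contDiff_const.mul contDiff_id)),
    ⟨R ^ n * (M * (2 * R) ^ α), ?_⟩, fun k hk y => ?_⟩
  · have hxR : ∀ᶠ i in l, |x i| < R :=
      hx.abs.eventually_lt_const (lt_add_of_le_of_pos (le_max_left _ _) one_pos)
    have hsR : ∀ᶠ i in l, |s i| < R :=
      hs.abs.eventually_lt_const (lt_add_of_le_of_pos (le_max_right _ _) one_pos)
    filter_upwards [hxR, hsR] with i hxi hsi
    exact hM.comp_affine hα hR1 hxi.le hsi.le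
  · have hcont : Continuous (iteratedDeriv k f) :=
      hf.1.continuous_iteratedDeriv k (by exact_mod_cast hk)
    simp only [iteratedDeriv_comp_affine hf.1 hk]
    exact (hs.pow k).smul ((hcont.tendsto _).comp (hx.add (hs.mul_const y)))

lemma comp_affine (hf : MemCnR n α f) (hα : 0 ≤ α) (x s : ℝ) :
    MemCnR n α fun w => f (x + s * w) :=
  (hf.tendstoCnR_comp_affine (l := pure ()) hα tendsto_const_nhds tendsto_const_nhds).memCnR

lemma of_zero (hcont : Continuous f) {M : ℝ} (hM : ∀ y, ‖f y‖ ≤ M * (1 + |y|) ^ α) :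
    MemCnR 0 α f :=
  CnRBound.memCnR (M := M) ⟨contDiff_zero.2 hcont, fun k hk y => by
    simpa only [Nat.le_zero.1 hk, iteratedDeriv_zero] using hM y⟩

lemma of_deriv (hf : MemCnR 0 α f) (hdiff : Differentiable ℝ f)
    (hderiv : MemCnR n α (deriv f)) : MemCnR (n + 1) α f := by
  obtain ⟨A, hA⟩ := hf.exists_bound
  obtain ⟨B, hB⟩ := hderiv.exists_bound
  refine CnRBound.memCnR (M := max A B) ⟨?_, fun k hk y => ?_⟩
  · exact_mod_cast contDiff_succ_iff_deriv.2 ⟨hdiff, by simp, hderiv.1⟩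
  · have hr := one_add_abs_rpow_nonneg α y
    rcases k with _ | k
    · exact (hA.norm_le 0 le_rfl y).trans (mul_le_mul_of_nonneg_right (le_max_left _ _) hr)
    · rw [iteratedDeriv_succ']
      exact (hB.norm_le k (Nat.succ_le_succ_iff.1 hk) y).trans
        (mul_le_mul_of_nonneg_right (le_max_right _ _) hr)

end MemCnR

/-! ### Constants, coordinates and Gaussians -/

lemma memCnR_const (n : ℕ) (c : ℂ) : MemCnR n 0 fun _ => c :=
  CnRBound.memCnR (M := ‖c‖) ⟨contDiff_const, fun k _ y => by
    rw [iteratedDeriv_const]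
    split_ifs <;> simp⟩

lemma memCnR_ofReal (n : ℕ) : MemCnR n 1 fun y => (y : ℂ) := by
  have hbase : MemCnR 0 1 fun y => (y : ℂ) :=
    .of_zero Complex.continuous_ofReal (M := 1) fun y => by simp
  rcases n with _ | n
  · exact hbase
  · have hderiv : deriv (fun y : ℝ => (y : ℂ)) = fun _ => 1 :=
      funext fun y => (hasDerivAt_id y).ofReal_comp.deriv.trans Complex.ofReal_one
    refine hbase.of_deriv Complex.ofRealCLM.differentiable ?_
    rw [hderiv]
    exact (memCnR_const n 1).mono zero_le_one

lemma ofReal_add_I_ne_zero (w : ℝ) : (w : ℂ) + Complex.I ≠ 0 := fun h => by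
  simpa using congrArg Complex.im h

lemma hasDerivAt_inv_ofReal_add_I (w : ℝ) :
    HasDerivAt (fun v : ℝ => ((v : ℂ) + Complex.I)⁻¹)
      (-(((w : ℂ) + Complex.I)⁻¹ * ((w : ℂ) + Complex.I)⁻¹)) w := by
  have hden : HasDerivAt (fun v : ℝ => (v : ℂ) + Complex.I) 1 w := by
    simpa using (hasDerivAt_id w).ofReal_comp.add_const Complex.I
  refine (hden.fun_inv (ofReal_add_I_ne_zero w)).congr_deriv ?_
  rw [neg_div, one_div, sq, mul_inv]

lemma norm_inv_ofReal_add_I_le (w : ℝ) :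
    ‖((w : ℂ) + Complex.I)⁻¹‖ ≤ 2 * (1 + |w|) ^ (-1 : ℝ) := by
  have hre : |w| ≤ ‖(w : ℂ) + Complex.I‖ := by
    simpa using Complex.abs_re_le_norm ((w : ℂ) + Complex.I)
  have him : 1 ≤ ‖(w : ℂ) + Complex.I‖ := by
    simpa using Complex.abs_im_le_norm ((w : ℂ) + Complex.I)
  rw [norm_inv, Real.rpow_neg_one, ← div_eq_mul_inv, inv_eq_one_div,
    div_le_div_iff₀ (by linarith) (by positivity)]
  linarith

lemma memCnR_inv_ofReal_add_I (n : ℕ) : MemCnR n (-1) fun w => ((w : ℂ) + Complex.I)⁻¹ := by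
  have hdiff : Differentiable ℝ fun w : ℝ => ((w : ℂ) + Complex.I)⁻¹ := fun w =>
    (hasDerivAt_inv_ofReal_add_I w).differentiableAt
  have hbase : MemCnR 0 (-1) fun w => ((w : ℂ) + Complex.I)⁻¹ :=
    .of_zero hdiff.continuous norm_inv_ofReal_add_I_le
  induction n with
  | zero => exact hbase
  | succ n ih =>
    refine hbase.of_deriv hdiff ?_
    rw [funext fun w => (hasDerivAt_inv_ofReal_add_I w).deriv]
    simpa only [neg_one_mul] using ((ih.mul ih).const_mul (-1)).mono (by norm_num : _ ≤ (-1 : ℝ))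

/-- The Gaussian `e^{-y²}` as a complex-valued function; rescaled, it serves as a cutoff. -/
def gaussian (y : ℝ) : ℂ := Complex.exp (-(y : ℂ) ^ 2)

lemma hasDerivAt_gaussian_comp_affine (x s w : ℝ) :
    HasDerivAt (fun w => gaussian (x + s * w))
      (-2 * s * (x + s * w) * gaussian (x + s * w)) w := by
  have haffine : HasDerivAt (fun w : ℝ => ((x + s * w : ℝ) : ℂ)) s w := by
    simpa using (((hasDerivAt_id w).const_mul s).const_add x).ofReal_comp
  refine (haffine.fun_pow 2).fun_neg.cexp.congr_deriv ?_
  simp only [gaussian]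
  push_cast
  ring

lemma norm_gaussian (y : ℝ) : ‖gaussian y‖ = Real.exp (-y ^ 2) := by
  rw [gaussian, Complex.norm_exp]
  norm_cast

lemma exp_neg_abs_mul_abs_le_rpow (α w : ℝ) : Real.exp (-(|α| * |w|)) ≤ (1 + |w|) ^ α := by
  have hlog0 : 0 ≤ Real.log (1 + |w|) := Real.log_nonneg (by simp)
  have hlog : Real.log (1 + |w|) ≤ |w| := by
    linarith [Real.log_le_sub_one_of_pos (by positivity : 0 < 1 + |w|)]
  rw [Real.rpow_def_of_pos (by positivity)]
  refine Real.exp_le_exp.2 ?_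
  nlinarith [neg_abs_le α, abs_nonneg α]

lemma abs_mul_abs_le_add_sq {s : ℝ} (hs : s ≠ 0) (α w : ℝ) :
    |α| * |w| ≤ α ^ 2 / (2 * s ^ 2) + s ^ 2 * w ^ 2 / 2 := by
  have hsquare : |α| ^ 2 / (2 * s ^ 2) + s ^ 2 * |w| ^ 2 / 2 - |α| * |w| =
      (|α| - s ^ 2 * |w|) ^ 2 / (2 * s ^ 2) := by
    field_simp
    ring
  rw [← sq_abs α, ← sq_abs w, ← sub_nonneg, hsquare]
  positivity

lemma norm_gaussian_comp_affine_le (α x : ℝ) {s : ℝ} (hs : s ≠ 0) (w : ℝ) :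
    ‖gaussian (x + s * w)‖ ≤ Real.exp (x ^ 2 + α ^ 2 / (2 * s ^ 2)) * (1 + |w|) ^ α := by
  have hexponent : -(x + s * w) ^ 2 ≤ x ^ 2 + α ^ 2 / (2 * s ^ 2) + -(|α| * |w|) := by
    nlinarith [abs_mul_abs_le_add_sq hs α w, sq_nonneg (2 * x + s * w)]
  calc ‖gaussian (x + s * w)‖
      ≤ Real.exp (x ^ 2 + α ^ 2 / (2 * s ^ 2) + -(|α| * |w|)) := by
        rw [norm_gaussian]
        exact Real.exp_le_exp.2 hexponent
    _ ≤ Real.exp (x ^ 2 + α ^ 2 / (2 * s ^ 2)) * (1 + |w|) ^ α := by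
        rw [Real.exp_add]
        exact mul_le_mul_of_nonneg_left (exp_neg_abs_mul_abs_le_rpow α w) (Real.exp_pos _).le

lemma memCnR_gaussian_comp_affine (n : ℕ) (α x : ℝ) {s : ℝ} (hs : s ≠ 0) :
    MemCnR n α fun w => gaussian (x + s * w) := by
  have hdiff : Differentiable ℝ fun w => gaussian (x + s * w) := fun w =>
    (hasDerivAt_gaussian_comp_affine x s w).differentiableAt
  have hbase (α : ℝ) : MemCnR 0 α fun w => gaussian (x + s * w) :=
    .of_zero hdiff.continuous (norm_gaussian_comp_affine_le α x hs)
  induction n generalizing α with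
  | zero => exact hbase α
  | succ n ih =>
    refine (hbase α).of_deriv hdiff ?_
    rw [funext fun w => (hasDerivAt_gaussian_comp_affine x s w).deriv]
    have haffine : MemCnR n 1 fun w : ℝ => -2 * (s : ℂ) * (x + s * w) :=
      (((memCnR_const n x).mono zero_le_one).add ((memCnR_ofReal n).const_mul s)).const_mul _
    simpa only [add_sub_cancel] using haffine.mul (ih (α - 1))

lemma MemCnR.gaussian_mul {n : ℕ} {α : ℝ} {g : ℝ → ℂ} (hg : MemCnR n α g) (γ x : ℝ) {s : ℝ}
    (hs : s ≠ 0) : MemCnR n γ fun w => gaussian (x + s * w) * g w := by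
  simpa only [sub_add_cancel] using (memCnR_gaussian_comp_affine n (γ - α) x hs).mul hg

lemma MemCnR.tendstoCnR_gaussian_mul {ι : Type*} {l : Filter ι} {n : ℕ} {α : ℝ} {g : ℝ → ℂ}
    (hg : MemCnR n α g) {x s : ι → ℝ} (hx : Tendsto x l (𝓝 0)) (hs : Tendsto s l (𝓝 0)) :
    TendstoCnR n α (fun i w => gaussian (x i + s i * w) * g w) l g := by
  have hgaussian : MemCnR n 0 gaussian := by
    simpa only [zero_add, one_mul] using memCnR_gaussian_comp_affine n 0 0 one_ne_zero
  simpa [gaussian] using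
    (hgaussian.tendstoCnR_comp_affine le_rfl hx hs).mul (hg.tendstoCnR_const l)

/-! ### Integration by parts against `e^{iw²/4}` -/

/-- The Schrödinger kernel `e^{iw²/4}` in the variable `w = (y - x) / √t`. -/
def fresnelPhase (w : ℝ) : ℂ := Complex.exp (Complex.I * w ^ 2 / 4)

lemma norm_fresnelPhase (w : ℝ) : ‖fresnelPhase w‖ = 1 := by
  have hexponent : Complex.I * (w : ℂ) ^ 2 / 4 = ((w ^ 2 / 4 : ℝ) : ℂ) * Complex.I := by
    push_cast
    ring
  rw [fresnelPhase, hexponent, Complex.norm_exp_ofReal_mul_I]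

lemma hasDerivAt_fresnelPhase (w : ℝ) :
    HasDerivAt fresnelPhase (Complex.I * w / 2 * fresnelPhase w) w := by
  refine ((((hasDerivAt_id w).ofReal_comp.fun_pow 2).const_mul Complex.I).div_const
    4).cexp.congr_deriv ?_
  simp only [fresnelPhase, id, Complex.ofReal_one]
  push_cast
  ring

lemma continuous_fresnelPhase : Continuous fresnelPhase := by
  unfold fresnelPhase
  fun_prop

lemma norm_fresnelPhase_mul (w : ℝ) (z : ℂ) : ‖fresnelPhase w * z‖ = ‖z‖ := by
  rw [norm_mul, norm_fresnelPhase, one_mul]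

lemma integrable_one_add_abs_rpow {α : ℝ} (hα : α < -1) :
    Integrable fun y : ℝ => (1 + |y|) ^ α := by
  simpa using integrable_one_add_norm (E := ℝ) (μ := volume) (r := -α) (by simpa using by linarith)

lemma MemCnR.integrable_fresnelPhase_mul {α : ℝ} {g : ℝ → ℂ} (hg : MemCnR 0 α g) (hα : α < -1) :
    Integrable fun w => fresnelPhase w * g w := by
  obtain ⟨M, hM⟩ := hg.exists_bound
  refine ((integrable_one_add_abs_rpow hα).const_mul M).mono'
    (continuous_fresnelPhase.mul hg.1.continuous).aestronglyMeasurable (.of_forall fun w => ?_)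
  rw [norm_fresnelPhase_mul]
  simpa using hM.norm_le 0 le_rfl w

lemma TendstoCnR.tendsto_integral_fresnelPhase_mul {ι : Type*} {l : Filter ι}
    [l.IsCountablyGenerated] {α : ℝ} {g : ι → ℝ → ℂ} {g₀ : ℝ → ℂ} (hg : TendstoCnR 0 α g l g₀)
    (hα : α < -1) :
    Tendsto (fun i => ∫ w, fresnelPhase w * g i w) l (𝓝 (∫ w, fresnelPhase w * g₀ w)) := by
  obtain ⟨M, hM⟩ := hg.exists_bound
  refine tendsto_integral_filter_of_dominated_convergence (fun w => M * (1 + |w|) ^ α)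
    ?_ ?_ ((integrable_one_add_abs_rpow hα).const_mul M) (.of_forall fun w => ?_)
  · filter_upwards [hM] with i hi
    exact (continuous_fresnelPhase.mul hi.contDiff.continuous).aestronglyMeasurable
  · filter_upwards [hM] with i hi
    refine .of_forall fun w => ?_
    rw [norm_fresnelPhase_mul]
    simpa using hi.norm_le 0 le_rfl w
  · simpa using (hg.tendsto 0 le_rfl w).const_mul (fresnelPhase w)

lemma MemCnR.integral_fresnelPhase_mul_ofReal_mul {α : ℝ} {h : ℝ → ℂ} (hh : MemCnR 1 α h)
    (hα : α + 1 < -1) :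
    ∫ w, fresnelPhase w * (w * h w) = 2 * Complex.I * ∫ w, fresnelPhase w * deriv h w := by
  have hintw : Integrable fun w : ℝ => fresnelPhase w * (w * h w) := by
    refine MemCnR.integrable_fresnelPhase_mul (α := α + 1) ?_ hα
    simpa only [add_comm] using (memCnR_ofReal 0).mul (hh.of_le zero_le_one)
  have hintd : Integrable fun w => fresnelPhase w * deriv h w :=
    hh.deriv.integrable_fresnelPhase_mul (by linarith)
  have hparts : ∫ w, Complex.I / 2 * (fresnelPhase w * (w * h w)) + fresnelPhase w * deriv h w
      = 0 := by
    refine integral_eq_zero_of_hasDerivAt_of_integrable (f := fun w => fresnelPhase w * h w)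
      (fun w => ?_) ((hintw.const_mul _).add hintd)
      ((hh.of_le zero_le_one).integrable_fresnelPhase_mul (by linarith))
    exact ((hasDerivAt_fresnelPhase w).mul (hh.differentiable w).hasDerivAt).congr_deriv (by ring)
  rw [integral_add (hintw.const_mul _) hintd, integral_const_mul] at hparts
  linear_combination (-2 * Complex.I) * hparts + (∫ w, fresnelPhase w * (w * h w)) * Complex.I_sq

/-- One step of regularisation by parts. With `h = g / (w + i)` one has
`e^{iw²/4} g = -2i (e^{iw²/4} h)' + e^{iw²/4} · i (h + 2h')`; the last factor, which has the same
oscillatory integral as `g`, costs one derivative of `g` and gains one power of decay. -/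
def fresnelReduce (g : ℝ → ℂ) (w : ℝ) : ℂ :=
  Complex.I * ((w + Complex.I)⁻¹ * g w + 2 * deriv (fun v : ℝ => (v + Complex.I)⁻¹ * g v) w)

lemma fresnelReduce_const_mul (c : ℂ) (g : ℝ → ℂ) :
    fresnelReduce (fun w => c * g w) = fun w => c * fresnelReduce g w := by
  funext w
  simp only [fresnelReduce, mul_left_comm _ c, deriv_const_mul_field']
  ring

lemma MemCnR.fresnelReduce_sub {n : ℕ} {α : ℝ} {f g : ℝ → ℂ} (hf : MemCnR (n + 1) α f)
    (hg : MemCnR (n + 1) α g) :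
    fresnelReduce (fun w => f w - g w) = fun w => fresnelReduce f w - fresnelReduce g w := by
  funext w
  have hdiff {f : ℝ → ℂ} (hf : MemCnR (n + 1) α f) :
      DifferentiableAt ℝ (fun v : ℝ => ((v : ℂ) + Complex.I)⁻¹ * f v) w :=
    ((memCnR_inv_ofReal_add_I (n + 1)).mul hf).differentiable w
  simp only [fresnelReduce, mul_sub, deriv_fun_sub (hdiff hf) (hdiff hg)]
  ring

protected lemma TendstoCnR.fresnelReduce {ι : Type*} {l : Filter ι} {n : ℕ} {α : ℝ} {g : ι → ℝ → ℂ}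
    {g₀ : ℝ → ℂ} (hg : TendstoCnR (n + 1) α g l g₀) :
    TendstoCnR n (-1 + α) (fun i => fresnelReduce (g i)) l (fresnelReduce g₀) :=
  have hh := ((memCnR_inv_ofReal_add_I (n + 1)).tendstoCnR_const l).mul hg
  ((hh.of_le n.le_succ).add (hh.deriv.const_mul 2)).const_mul Complex.I

lemma TendstoCnR.iterate_fresnelReduce {ι : Type*} {l : Filter ι} {n : ℕ} (m : ℕ) {α : ℝ}
    {g : ι → ℝ → ℂ} {g₀ : ℝ → ℂ} (hg : TendstoCnR (n + m) α g l g₀) :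
    TendstoCnR n (α - m) (fun i => fresnelReduce^[m] (g i)) l
      (fresnelReduce^[m] g₀) := by
  induction m generalizing α g g₀ with
  | zero => simpa using hg
  | succ m ih =>
    have hexp : α - (m + 1 : ℕ) = -1 + α - m := by push_cast; ring
    simpa only [Function.iterate_succ_apply, hexp] using ih hg.fresnelReduce

lemma MemCnR.iterate_fresnelReduce {n m : ℕ} {α : ℝ} {g : ℝ → ℂ} (hg : MemCnR (n + m) α g) :
    MemCnR n (α - m) (fresnelReduce^[m] g) :=
  ((hg.tendstoCnR_const (pure ())).iterate_fresnelReduce m).memCnR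

lemma MemCnR.integral_fresnelPhase_mul_fresnelReduce {α : ℝ} {g : ℝ → ℂ} (hg : MemCnR 1 α g)
    (hα : α < -1) :
    ∫ w, fresnelPhase w * fresnelReduce g w = ∫ w, fresnelPhase w * g w := by
  set h : ℝ → ℂ := fun w => (w + Complex.I)⁻¹ * g w with hh_def
  have hh : MemCnR 1 (-1 + α) h := (memCnR_inv_ofReal_add_I 1).mul hg
  have hh0 := (hh.of_le zero_le_one).integrable_fresnelPhase_mul (by linarith)
  have hh' := hh.deriv.integrable_fresnelPhase_mul (by linarith)
  have hhw : Integrable fun w : ℝ => fresnelPhase w * (w * h w) := by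
    refine MemCnR.integrable_fresnelPhase_mul (α := α) ?_ hα
    simpa only [add_neg_cancel_left] using (memCnR_ofReal 0).mul (hh.of_le zero_le_one)
  have hsplit (w : ℝ) :
      fresnelPhase w * g w = fresnelPhase w * (w * h w) + Complex.I * (fresnelPhase w * h w) := by
    have : g w = (w + Complex.I) * h w := by
      rw [hh_def, mul_inv_cancel_left₀ (ofReal_add_I_ne_zero w)]
    rw [this]
    ring
  calc ∫ w, fresnelPhase w * fresnelReduce g w
      = ∫ w, Complex.I * (fresnelPhase w * h w) + 2 * Complex.I * (fresnelPhase w * deriv h w) :=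
        integral_congr_ae (.of_forall fun w => by simp only [fresnelReduce, hh_def]; ring)
    _ = (∫ w, fresnelPhase w * (w * h w)) + ∫ w, Complex.I * (fresnelPhase w * h w) := by
        rw [integral_add (hh0.const_mul _) (hh'.const_mul _), add_comm, integral_const_mul (2 * _),
          hh.integral_fresnelPhase_mul_ofReal_mul (by linarith)]
    _ = ∫ w, fresnelPhase w * g w := by
        rw [← integral_add hhw (hh0.const_mul _)]
        exact integral_congr_ae (.of_forall fun w => (hsplit w).symm)

/-! ### The regularised oscillatory integral -/

/-- The oscillatory integral `∫ e^{iw²/4} g(w) dw` after `m` regularisation steps. It converges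
absolutely for `g ∈ C^m(ℝ, r^α)` with `α + 1 < m`, although `e^{iw²/4} g` need not be
integrable. -/
def fresnelIntegral (m : ℕ) (g : ℝ → ℂ) : ℂ := ∫ w, fresnelPhase w * (fresnelReduce^[m] g) w

lemma fresnelIntegral_const_mul (m : ℕ) (c : ℂ) (g : ℝ → ℂ) :
    fresnelIntegral m (fun w => c * g w) = c * fresnelIntegral m g := by
  have hiterate : fresnelReduce^[m] (fun w => c * g w) = fun w => c * (fresnelReduce^[m] g) w := by
    induction m generalizing g with
    | zero => rfl
    | succ m ih => rw [Function.iterate_succ_apply, fresnelReduce_const_mul, ih,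
        Function.iterate_succ_apply]
  simp only [fresnelIntegral, hiterate, mul_left_comm _ c, integral_const_mul]

lemma MemCnR.iterate_fresnelReduce_sub {m : ℕ} {α : ℝ} {f g : ℝ → ℂ} (hf : MemCnR m α f)
    (hg : MemCnR m α g) :
    fresnelReduce^[m] (fun w => f w - g w) =
      fun w => (fresnelReduce^[m] f) w - (fresnelReduce^[m] g) w := by
  induction m with
  | zero => rfl
  | succ m ih =>
    have hreduce {f : ℝ → ℂ} (hf : MemCnR (m + 1) α f) :
        MemCnR 1 (α - m) (fresnelReduce^[m] f) :=
      MemCnR.iterate_fresnelReduce (by rwa [add_comm])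
    simp only [Function.iterate_succ_apply', ih (hf.of_le m.le_succ) (hg.of_le m.le_succ),
      (hreduce hf).fresnelReduce_sub (n := 0) (hreduce hg)]

lemma MemCnR.integrable_fresnelPhase_mul_iterate {m : ℕ} {α : ℝ} {g : ℝ → ℂ} (hg : MemCnR m α g)
    (hα : α + 1 < m) : Integrable fun w => fresnelPhase w * (fresnelReduce^[m] g) w :=
  (MemCnR.iterate_fresnelReduce (n := 0) (by rwa [zero_add])).integrable_fresnelPhase_mul
    (by linarith)

lemma MemCnR.fresnelIntegral_sub {m : ℕ} {α : ℝ} {f g : ℝ → ℂ} (hf : MemCnR m α f)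
    (hg : MemCnR m α g) (hα : α + 1 < m) :
    fresnelIntegral m (fun w => f w - g w) = fresnelIntegral m f - fresnelIntegral m g := by
  simp only [fresnelIntegral, hf.iterate_fresnelReduce_sub hg, mul_sub]
  exact integral_sub (hf.integrable_fresnelPhase_mul_iterate hα)
    (hg.integrable_fresnelPhase_mul_iterate hα)

lemma TendstoCnR.tendsto_fresnelIntegral {ι : Type*} {l : Filter ι} [l.IsCountablyGenerated]
    {m : ℕ} {α : ℝ} {g : ι → ℝ → ℂ} {g₀ : ℝ → ℂ} (hg : TendstoCnR m α g l g₀)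
    (hα : α + 1 < m) :
    Tendsto (fun i => fresnelIntegral m (g i)) l (𝓝 (fresnelIntegral m g₀)) :=
  (TendstoCnR.iterate_fresnelReduce (n := 0) m
    (by rwa [zero_add])).tendsto_integral_fresnelPhase_mul (by linarith)

lemma MemCnR.fresnelIntegral_succ {m : ℕ} {α : ℝ} {g : ℝ → ℂ} (hg : MemCnR (m + 1) α g)
    (hα : α + 1 < m) : fresnelIntegral (m + 1) g = fresnelIntegral m g := by
  have hreduce : MemCnR 1 (α - m) (fresnelReduce^[m] g) :=
    MemCnR.iterate_fresnelReduce (by rwa [add_comm])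
  simp only [fresnelIntegral, Function.iterate_succ_apply']
  exact hreduce.integral_fresnelPhase_mul_fresnelReduce (by linarith)

lemma MemCnR.fresnelIntegral_eq_integral {m : ℕ} {α : ℝ} {g : ℝ → ℂ} (hg : MemCnR m α g)
    (hα : α < -1) : fresnelIntegral m g = ∫ w, fresnelPhase w * g w := by
  induction m with
  | zero => rfl
  | succ m ih =>
    have hαm : α + 1 < m := by linarith [m.cast_nonneg (α := ℝ)]
    rw [hg.fresnelIntegral_succ hαm, ih (hg.of_le m.le_succ)]

lemma MemCnR.tendsto_integral_gaussian_mul {ι : Type*} {l : Filter ι} [l.IsCountablyGenerated]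
    {m : ℕ} {α : ℝ} {g : ℝ → ℂ} (hg : MemCnR m α g) (hα : α + 1 < m) {x s : ι → ℝ}
    (hx : Tendsto x l (𝓝 0)) (hs : Tendsto s l (𝓝 0)) (hs0 : ∀ᶠ i in l, s i ≠ 0) :
    Tendsto (fun i => ∫ w, fresnelPhase w * (gaussian (x i + s i * w) * g w)) l
      (𝓝 (fresnelIntegral m g)) := by
  refine ((hg.tendstoCnR_gaussian_mul hx hs).tendsto_fresnelIntegral hα).congr' ?_
  filter_upwards [hs0] with i hi
  exact (hg.gaussian_mul (-2) (x i) hi).fresnelIntegral_eq_integral (by norm_num)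

lemma MemCnR.fresnelIntegral_ofReal_mul {m : ℕ} {α : ℝ} {g : ℝ → ℂ} (hg : MemCnR (m + 1) α g)
    (hα : α + 1 < m) :
    fresnelIntegral (m + 1) (fun w => w * g w) = 2 * Complex.I * fresnelIntegral m (deriv g) := by
  let cutoff (s w : ℝ) : ℂ := gaussian (0 + s * w) * g w
  have hcutoff : TendstoCnR (m + 1) α cutoff (𝓝[≠] 0) g :=
    hg.tendstoCnR_gaussian_mul tendsto_const_nhds (tendsto_id.mono_left nhdsWithin_le_nhds)
  have hleft : Tendsto (fun s => fresnelIntegral (m + 1) fun w => w * cutoff s w) (𝓝[≠] 0)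
      (𝓝 (fresnelIntegral (m + 1) fun w => w * g w)) :=
    (((memCnR_ofReal (m + 1)).tendstoCnR_const _).mul hcutoff).tendsto_fresnelIntegral
      (by push_cast; linarith)
  have hright : Tendsto (fun s => 2 * Complex.I * fresnelIntegral m (deriv (cutoff s))) (𝓝[≠] 0)
      (𝓝 (2 * Complex.I * fresnelIntegral m (deriv g))) :=
    (hcutoff.deriv.tendsto_fresnelIntegral hα).const_mul _
  refine tendsto_nhds_unique_of_eventuallyEq hleft hright ?_
  filter_upwards [self_mem_nhdsWithin] with s hs
  have hdecay : MemCnR (m + 1) (-3) (cutoff s) := hg.gaussian_mul (-3) 0 hs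
  rw [((memCnR_ofReal (m + 1)).mul hdecay).fresnelIntegral_eq_integral (by norm_num),
    hdecay.deriv.fresnelIntegral_eq_integral (by norm_num),
    (hdecay.of_le (by simp)).integral_fresnelPhase_mul_ofReal_mul (by norm_num)]

lemma cpow_half_mul_ofReal {z : ℂ} (hz : z ≠ 0) {r : ℝ} (hr : 0 < r) :
    (z * r) ^ ((1 : ℂ) / 2) = z ^ ((1 : ℂ) / 2) * (√r : ℝ) := by
  have hr' : (r : ℂ) ≠ 0 := Complex.ofReal_ne_zero.2 hr.ne'
  have hsqrt : ((√r : ℝ) : ℂ) = Complex.exp (Real.log r * (1 / 2)) := by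
    rw [Real.sqrt_eq_rpow, Real.rpow_def_of_pos hr]
    push_cast
    rfl
  rw [hsqrt, Complex.cpow_def_of_ne_zero (mul_ne_zero hz hr'), Complex.cpow_def_of_ne_zero hz,
    Complex.log_mul_ofReal r hr z hz, add_mul, Complex.exp_add, mul_comm]

lemma I_mul_pi_ne_zero : Complex.I * Real.pi ≠ 0 :=
  mul_ne_zero Complex.I_ne_zero (Complex.ofReal_ne_zero.2 Real.pi_ne_zero)

lemma integral_fresnelPhase_mul_gaussian {s : ℝ} (hs : s ≠ 0) :
    ∫ w, fresnelPhase w * gaussian (s * w) =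
      (Real.pi / ((s : ℂ) ^ 2 - Complex.I / 4)) ^ ((1 : ℂ) / 2) := by
  have hre : 0 < ((s : ℂ) ^ 2 - Complex.I / 4).re := by
    have : 0 < s ^ 2 := by positivity
    simpa [← Complex.ofReal_pow] using this
  rw [← integral_gaussian_complex hre]
  refine integral_congr_ae (.of_forall fun w => ?_)
  simp only [fresnelPhase, gaussian, ← Complex.exp_add]
  push_cast
  ring_nf

lemma tendsto_integral_fresnelPhase_mul_gaussian :
    Tendsto (fun s : ℝ => ∫ w, fresnelPhase w * gaussian (s * w)) (𝓝[≠] 0)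
      (𝓝 (2 * (Complex.I * Real.pi) ^ ((1 : ℂ) / 2))) := by
  have hbase : (Real.pi : ℂ) / (((0 : ℝ) : ℂ) ^ 2 - Complex.I / 4) =
      Complex.I * Real.pi * (4 : ℝ) := by
    rw [div_eq_iff (by simp)]
    push_cast
    linear_combination (Real.pi : ℂ) * Complex.I_sq
  have hvalue : ((Real.pi : ℂ) / (((0 : ℝ) : ℂ) ^ 2 - Complex.I / 4)) ^ ((1 : ℂ) / 2) =
      2 * (Complex.I * Real.pi) ^ ((1 : ℂ) / 2) := by
    have hsqrt : √(4 : ℝ) = 2 := by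
      rw [show (4 : ℝ) = 2 ^ 2 by norm_num, Real.sqrt_sq zero_le_two]
    rw [hbase, cpow_half_mul_ofReal I_mul_pi_ne_zero four_pos, hsqrt, mul_comm,
      Complex.ofReal_ofNat]
  have hcont : ContinuousAt
      (fun s : ℝ => ((Real.pi : ℂ) / ((s : ℂ) ^ 2 - Complex.I / 4)) ^ ((1 : ℂ) / 2)) 0 := by
    refine ContinuousAt.cpow (continuousAt_const.div (by fun_prop) (by simp))
      continuousAt_const ?_
    rw [hbase]
    exact Or.inr (by simp [Real.pi_ne_zero])
  rw [← hvalue]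
  refine (hcont.tendsto.mono_left nhdsWithin_le_nhds).congr' ?_
  filter_upwards [self_mem_nhdsWithin] with s hs
  exact (integral_fresnelPhase_mul_gaussian hs).symm

lemma fresnelIntegral_one {m : ℕ} (hm : 1 < m) :
    fresnelIntegral m (fun _ => 1) = 2 * (Complex.I * Real.pi) ^ ((1 : ℂ) / 2) := by
  have hlimit : Tendsto (fun s : ℝ => ∫ w, fresnelPhase w * (gaussian (0 + s * w) * 1)) (𝓝[≠] 0)
      (𝓝 (fresnelIntegral m fun _ => 1)) :=
    (memCnR_const m 1).tendsto_integral_gaussian_mul (by simpa using hm) tendsto_const_nhds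
      (tendsto_id.mono_left nhdsWithin_le_nhds) self_mem_nhdsWithin
  simp only [zero_add, mul_one] at hlimit
  exact tendsto_nhds_unique hlimit tendsto_integral_fresnelPhase_mul_gaussian

/-! ### Differentiation with respect to a parameter -/

lemma tendstoCnR_slope {n : ℕ} {α M τ₀ : ℝ} {g g' : ℝ → ℝ → ℂ} (hg : ∀ τ, ContDiff ℝ n (g τ))
    (hg' : ∀ᶠ τ in 𝓝 τ₀, CnRBound n α M (g' τ))
    (hderiv : ∀ k ≤ n, ∀ τ y, HasDerivAt (fun τ => iteratedDeriv k (g τ) y)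
      (iteratedDeriv k (g' τ) y) τ) :
    TendstoCnR n α (fun τ w => ((τ - τ₀)⁻¹ : ℝ) * (g τ w - g τ₀ w)) (𝓝[≠] τ₀) (g' τ₀) := by
  have hiterate {k : ℕ} (hk : k ≤ n) (τ y : ℝ) :
      iteratedDeriv k (fun w => ((τ - τ₀)⁻¹ : ℝ) * (g τ w - g τ₀ w)) y =
        slope (fun τ => iteratedDeriv k (g τ) y) τ₀ τ := by
    have hk' : (k : WithTop ℕ∞) ≤ n := by exact_mod_cast hk
    rw [iteratedDeriv_const_mul_field, iteratedDeriv_fun_sub ((hg τ).of_le hk').contDiffAt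
      ((hg τ₀).of_le hk').contDiffAt, slope_def_module, Complex.real_smul]
  obtain ⟨δ, hδ, hball⟩ := Metric.eventually_nhds_iff_ball.1 hg'
  refine ⟨(hball τ₀ (Metric.mem_ball_self hδ)).contDiff, ⟨M, ?_⟩, fun k hk y => ?_⟩
  · filter_upwards [mem_nhdsWithin_of_mem_nhds (Metric.ball_mem_nhds τ₀ hδ),
      self_mem_nhdsWithin] with τ hτ hne
    refine ⟨contDiff_const.mul ((hg τ).sub (hg τ₀)), fun k hk y => ?_⟩
    have hmean := (convex_ball τ₀ δ).norm_image_sub_le_of_norm_hasDerivWithin_le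
      (fun τ _ => (hderiv k hk τ y).hasDerivWithinAt)
      (fun τ hτ => (hball τ hτ).norm_le k hk y) (Metric.mem_ball_self hδ) hτ
    rw [hiterate hk, slope_def_module, norm_smul, norm_inv, inv_mul_le_iff₀
      (norm_pos_iff.2 (sub_ne_zero.2 hne)), mul_comm]
    exact hmean
  · simp only [hiterate hk]
    exact hasDerivAt_iff_tendsto_slope.1 (hderiv k hk τ₀ y)

lemma hasDerivAt_fresnelIntegral {m : ℕ} {α M τ₀ : ℝ} {g g' : ℝ → ℝ → ℂ} (hα : α + 1 < m)
    (hg : ∀ τ, MemCnR m α (g τ)) (hg' : ∀ᶠ τ in 𝓝 τ₀, CnRBound m α M (g' τ))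
    (hderiv : ∀ k ≤ m, ∀ τ y, HasDerivAt (fun τ => iteratedDeriv k (g τ) y)
      (iteratedDeriv k (g' τ) y) τ) :
    HasDerivAt (fun τ => fresnelIntegral m (g τ)) (fresnelIntegral m (g' τ₀)) τ₀ := by
  rw [hasDerivAt_iff_tendsto_slope]
  refine ((tendstoCnR_slope (fun τ => (hg τ).1) hg' hderiv).tendsto_fresnelIntegral hα).congr
    fun τ => ?_
  rw [fresnelIntegral_const_mul, (hg τ).fresnelIntegral_sub (hg τ₀) hα, slope_def_module,
    Complex.real_smul]

lemma hasDerivAt_iteratedDeriv {E : Type*} [NormedAddCommGroup E] [NormedSpace ℝ E] {n k : ℕ}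
    {f : ℝ → E} (hf : ContDiff ℝ (n + 1 : ℕ) f) (hk : k ≤ n) (y : ℝ) :
    HasDerivAt (iteratedDeriv k f) (iteratedDeriv k (deriv f) y) y := by
  rw [← iteratedDeriv_succ', iteratedDeriv_succ]
  exact (hf.differentiable_iteratedDeriv k (by exact_mod_cast Nat.lt_succ_of_le hk)
    y).hasDerivAt

lemma iteratedDeriv_ofReal_mul {k : ℕ} {g : ℝ → ℂ} (hg : ContDiff ℝ k g) (y : ℝ) :
    iteratedDeriv k (fun w => w * g w) y =
      y * iteratedDeriv k g y + k * iteratedDeriv (k - 1) g y := by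
  induction k generalizing g with
  | zero => simp
  | succ k ih =>
    have hg' : ContDiff ℝ k (deriv g) := by simpa using hg.iterate_deriv' k 1
    have hgk : ContDiff ℝ k g := hg.of_le (by exact_mod_cast k.le_succ)
    have hwg' : ContDiff ℝ k fun w : ℝ => w * deriv g w := Complex.ofRealCLM.contDiff.mul hg'
    have hprod : deriv (fun w => w * g w) = fun w : ℝ => g w + w * deriv g w := by
      funext w
      have hgw := (hg.differentiable (by simp) w).hasDerivAt
      exact ((hasDerivAt_id w).ofReal_comp.mul hgw).deriv.trans (by simp)
    rw [iteratedDeriv_succ', hprod, iteratedDeriv_fun_add hgk.contDiffAt hwg'.contDiffAt, ih hg',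
      iteratedDeriv_succ']
    rcases k with _ | k
    · simp [add_comm]
    · rw [Nat.add_sub_cancel, Nat.add_sub_cancel, ← iteratedDeriv_succ' (n := k)]
      push_cast
      ring

lemma hasDerivAt_iteratedDeriv_comp_mul {n k : ℕ} {f : ℝ → ℂ} (hf : ContDiff ℝ (n + 1 : ℕ) f)
    (hk : k ≤ n) (x s y : ℝ) :
    HasDerivAt (fun s => iteratedDeriv k (fun w => f (x + s * w)) y)
      (iteratedDeriv k (fun w => w * deriv f (x + s * w)) y) s := by
  have hf' : ContDiff ℝ n (deriv f) := by simpa using hf.iterate_deriv' n 1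
  have hf's : ContDiff ℝ k fun w => deriv f (x + s * w) :=
    (hf'.of_le (by exact_mod_cast hk)).comp (contDiff_const.add (contDiff_const.mul contDiff_id))
  have haffine : HasDerivAt (fun s => x + s * y) y s := by
    simpa using ((hasDerivAt_id s).mul_const y).const_add x
  have hmain := ((hasDerivAt_id s).fun_pow k).smul
    ((hasDerivAt_iteratedDeriv hf hk (x + s * y)).scomp s haffine)
  simp only [iteratedDeriv_comp_affine hf (hk.trans n.le_succ)]
  refine hmain.congr_deriv ?_
  rw [iteratedDeriv_ofReal_mul hf's, iteratedDeriv_comp_affine hf' hk]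
  rcases k with _ | k
  · simp
  · rw [Nat.add_sub_cancel, iteratedDeriv_comp_affine hf' (k.le_succ.trans hk),
      ← iteratedDeriv_succ' (n := k)]
    simp only [id, Function.comp_apply, Complex.real_smul]
    push_cast
    ring

namespace MemCnR

variable {m : ℕ} {β : ℝ} {F : ℝ → ℂ}

lemma hasDerivAt_fresnelIntegral_comp_add (hF : MemCnR (m + 1) β F) (hβ0 : 0 ≤ β)
    (hβ : β + 1 < m) (s x : ℝ) :
    HasDerivAt (fun x => fresnelIntegral m fun w => F (x + s * w))
      (fresnelIntegral m fun w => deriv F (x + s * w)) x := by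
  have hbounded : TendstoCnR m β (fun x w => deriv F (x + s * w)) (𝓝 x) _ :=
    hF.deriv.tendstoCnR_comp_affine hβ0 tendsto_id tendsto_const_nhds
  obtain ⟨M, hM⟩ := hbounded.exists_bound
  refine hasDerivAt_fresnelIntegral hβ (fun x => (hF.of_le m.le_succ).comp_affine hβ0 x s) hM
    fun k hk x y => ?_
  simp only [iteratedDeriv_comp_affine hF.1 (hk.trans m.le_succ),
    iteratedDeriv_comp_affine hF.deriv.1 hk]
  exact ((hasDerivAt_iteratedDeriv hF.1 hk _).comp_add_const x (s * y)).const_smul (s ^ k)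

lemma hasDerivAt_fresnelIntegral_comp_mul (hF : MemCnR (m + 2) β F) (hβ0 : 0 ≤ β)
    (hβ : β + 1 < m) (x s : ℝ) :
    HasDerivAt (fun s => fresnelIntegral m fun w => F (x + s * w))
      (2 * Complex.I * s * fresnelIntegral m fun w => deriv (deriv F) (x + s * w)) s := by
  have hF' (s : ℝ) : MemCnR (m + 1) β fun w => deriv F (x + s * w) :=
    hF.deriv.comp_affine hβ0 x s
  have hderiv : HasDerivAt (fun s => fresnelIntegral (m + 1) fun w => F (x + s * w))
      (fresnelIntegral (m + 1) fun w => w * deriv F (x + s * w)) s := by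
    have hF's : TendstoCnR (m + 1) β (fun s w => deriv F (x + s * w)) (𝓝 s) _ :=
      hF.deriv.tendstoCnR_comp_affine hβ0 tendsto_const_nhds tendsto_id
    obtain ⟨M, hM⟩ := (((memCnR_ofReal (m + 1)).tendstoCnR_const (𝓝 s)).mul hF's).exists_bound
    refine hasDerivAt_fresnelIntegral (g := fun s w => F (x + s * w))
      (g' := fun s w => w * deriv F (x + s * w)) (by push_cast; linarith) (fun s => ?_) hM
      fun k hk s y => hasDerivAt_iteratedDeriv_comp_mul hF.1 hk x s y
    exact ((hF.of_le (m + 1).le_succ).comp_affine hβ0 x s).mono (by linarith)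
  have hchain : deriv (fun w => deriv F (x + s * w)) =
      fun w => s * deriv (deriv F) (x + s * w) := by
    funext w
    simpa using iteratedDeriv_comp_affine (k := 1) hF.deriv.1 (by simp) x s w
  rw [(hF' s).fresnelIntegral_ofReal_mul hβ, hchain, fresnelIntegral_const_mul, ← mul_assoc]
    at hderiv
  refine hderiv.congr_of_eventuallyEq (.of_forall fun s => ?_)
  exact (((hF.of_le (m + 1).le_succ).comp_affine hβ0 x s).fresnelIntegral_succ hβ).symm

end MemCnR

/-! ### The free evolution -/

/-- The free Schrödinger evolution of `F`: the substitution `y = x + √t w` turns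
`(1/(2√(iπt))) ∫ e^{i(y-x)²/(4t)} F(y) dy` into `(1/(2√(iπ))) ∫ e^{iw²/4} F(x + √t w) dw`, read as
the regularised integral with `m` reduction steps. Since `√0 = 0`, it also makes sense at
`t = 0`. -/
def freeEvolution (m : ℕ) (F : ℝ → ℂ) (t x : ℝ) : ℂ :=
  (2 * (Complex.I * Real.pi) ^ ((1 : ℂ) / 2))⁻¹ * fresnelIntegral m fun w => F (x + √t * w)

lemma cpow_half_I_mul_pi_ne_zero : (Complex.I * Real.pi) ^ ((1 : ℂ) / 2) ≠ 0 := by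
  simp [Complex.cpow_eq_zero_iff]

lemma freeEvolution_zero {m : ℕ} (hm : 1 < m) (F : ℝ → ℂ) (x : ℝ) :
    freeEvolution m F 0 x = F x := by
  have hconst := fresnelIntegral_const_mul m (F x) fun _ => 1
  simp only [mul_one, fresnelIntegral_one hm] at hconst
  simp only [freeEvolution, Real.sqrt_zero, zero_mul, add_zero, hconst]
  field_simp [cpow_half_I_mul_pi_ne_zero]

lemma integral_schrodingerKernel_eq (F : ℝ → ℂ) {ε t : ℝ} (hε : 0 ≤ ε) (ht : 0 < t) (x : ℝ) :
    ∫ y : ℝ, Complex.exp (-(ε : ℂ) * y ^ 2) *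
        Complex.exp (Complex.I * ((y : ℂ) - x) ^ 2 / (4 * t)) * F y =
      (√t : ℝ) * ∫ w, fresnelPhase w *
        (gaussian (√ε * x + √ε * √t * w) * F (x + √t * w)) := by
  have hs : 0 < √t := Real.sqrt_pos.2 ht
  set f : ℝ → ℂ := fun y => Complex.exp (-(ε : ℂ) * y ^ 2) *
      Complex.exp (Complex.I * ((y : ℂ) - x) ^ 2 / (4 * t)) * F y with hf
  have hintegrand (w : ℝ) : fresnelPhase w *
      (gaussian (√ε * x + √ε * √t * w) * F (x + √t * w)) = f (x + √t * w) := by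
    have hphase : Complex.I * (((x + √t * w : ℝ) : ℂ) - x) ^ 2 / (4 * t) =
        Complex.I * w ^ 2 / 4 := by
      have hsq : ((√t : ℝ) : ℂ) ^ 2 = t := by exact_mod_cast Real.sq_sqrt ht.le
      have ht0 : (t : ℂ) ≠ 0 := Complex.ofReal_ne_zero.2 ht.ne'
      push_cast
      rw [add_sub_cancel_left, mul_pow, hsq]
      field_simp
    have hcutoff : -((√ε * x + √ε * √t * w : ℝ) : ℂ) ^ 2 =
        -(ε : ℂ) * ((x + √t * w : ℝ) : ℂ) ^ 2 := by
      have hsq : ((√ε : ℝ) : ℂ) ^ 2 = ε := by exact_mod_cast Real.sq_sqrt hε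
      rw [← hsq]
      push_cast
      ring
    simp only [hf, hphase, gaussian, hcutoff, fresnelPhase]
    ring
  simp only [hintegrand]
  rw [Measure.integral_comp_mul_left (fun z => f (x + z)) (√t), integral_add_left_eq_self f x,
    abs_of_pos (inv_pos.2 hs), Complex.real_smul, ← mul_assoc, ← Complex.ofReal_mul,
    mul_inv_cancel₀ hs.ne', Complex.ofReal_one, one_mul]

lemma two_mul_cpow_half_mul_freeEvolution (m : ℕ) (F : ℝ → ℂ) {t : ℝ} (ht : 0 < t) (x : ℝ) :
    2 * (Complex.I * Real.pi * t) ^ ((1 : ℂ) / 2) * freeEvolution m F t x =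
      (√t : ℝ) * fresnelIntegral m fun w => F (x + √t * w) := by
  rw [freeEvolution, cpow_half_mul_ofReal I_mul_pi_ne_zero ht]
  field_simp [cpow_half_I_mul_pi_ne_zero]

namespace MemCnR

variable {m : ℕ} {β : ℝ} {F : ℝ → ℂ}

lemma tendsto_integral_schrodingerKernel (hF : MemCnR m β F) (hβ0 : 0 ≤ β) (hβ : β + 1 < m)
    {t : ℝ} (ht : 0 < t) (x : ℝ) :
    Tendsto (fun ε : ℝ => ∫ y : ℝ, Complex.exp (-(ε : ℂ) * y ^ 2) *
        Complex.exp (Complex.I * ((y : ℂ) - x) ^ 2 / (4 * t)) * F y) (𝓝[>] 0)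
      (𝓝 (2 * (Complex.I * Real.pi * t) ^ ((1 : ℂ) / 2) * freeEvolution m F t x)) := by
  have hsqrt : Tendsto Real.sqrt (𝓝[>] 0) (𝓝 0) := by
    simpa using (Real.continuous_sqrt.tendsto 0).mono_left (nhdsWithin_le_nhds (s := Ioi 0))
  have hscale : ∀ᶠ ε : ℝ in 𝓝[>] 0, √ε * √t ≠ 0 := by
    filter_upwards [self_mem_nhdsWithin] with ε hε
    exact mul_ne_zero (Real.sqrt_pos.2 hε).ne' (Real.sqrt_pos.2 ht).ne'
  have hlimit := (hF.comp_affine hβ0 x √t).tendsto_integral_gaussian_mul hβ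
    (by simpa only [zero_mul] using hsqrt.mul_const x)
    (by simpa only [zero_mul] using hsqrt.mul_const √t) hscale
  rw [two_mul_cpow_half_mul_freeEvolution m F ht]
  refine (hlimit.const_mul ((√t : ℝ) : ℂ)).congr' ?_
  filter_upwards [self_mem_nhdsWithin] with ε hε
  exact (integral_schrodingerKernel_eq F (le_of_lt hε) ht x).symm

lemma continuous_freeEvolution (hF : MemCnR m β F) (hβ0 : 0 ≤ β) (hβ : β + 1 < m) :
    Continuous fun p : ℝ × ℝ => freeEvolution m F p.1 p.2 :=
  continuous_const.mul <| continuous_iff_continuousAt.2 fun _ =>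
    (hF.tendstoCnR_comp_affine hβ0 (continuous_snd.tendsto _)
      ((Real.continuous_sqrt.comp continuous_fst).tendsto _)).tendsto_fresnelIntegral hβ

lemma hasDerivAt_freeEvolution_space (hF : MemCnR (m + 1) β F) (hβ0 : 0 ≤ β) (hβ : β + 1 < m)
    (t x : ℝ) : HasDerivAt (freeEvolution m F t) (freeEvolution m (deriv F) t x) x :=
  (hF.hasDerivAt_fresnelIntegral_comp_add hβ0 hβ √t x).const_mul _

lemma hasDerivAt_freeEvolution_time (hF : MemCnR (m + 2) β F) (hβ0 : 0 ≤ β) (hβ : β + 1 < m)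
    {t : ℝ} (ht : 0 < t) (x : ℝ) :
    HasDerivAt (fun t => freeEvolution m F t x)
      (Complex.I * freeEvolution m (deriv (deriv F)) t x) t := by
  have hs : ((√t : ℝ) : ℂ) ≠ 0 := Complex.ofReal_ne_zero.2 (Real.sqrt_pos.2 ht).ne'
  refine (((hF.hasDerivAt_fresnelIntegral_comp_mul hβ0 hβ x √t).scomp t
    (Real.hasDerivAt_sqrt ht.ne')).const_mul _).congr_deriv ?_
  rw [freeEvolution, Complex.real_smul]
  push_cast
  field_simp

lemma schrodinger_freeEvolution (hF : MemCnR (m + 2) β F) (hβ0 : 0 ≤ β) (hβ : β + 1 < m)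
    {t : ℝ} (ht : 0 < t) (x : ℝ) :
    Complex.I * deriv (fun τ => freeEvolution m F τ x) t =
      -(deriv (deriv (freeEvolution m F t)) x) := by
  have hF₁ : MemCnR (m + 1) β F := hF.of_le (m + 1).le_succ
  rw [(hF.hasDerivAt_freeEvolution_time hβ0 hβ ht x).deriv,
    funext fun x => (hF₁.hasDerivAt_freeEvolution_space hβ0 hβ t x).deriv,
    (hF.deriv.hasDerivAt_freeEvolution_space hβ0 hβ t x).deriv, ← mul_assoc, Complex.I_mul_I,
    neg_one_mul]

lemma tendsto_freeEvolution_zero (hF : MemCnR m β F) (hβ0 : 0 ≤ β) (hβ : β + 1 < m) (x : ℝ) :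
    Tendsto (fun t => freeEvolution m F t x) (𝓝 0) (𝓝 (F x)) := by
  have hm : 1 < m := by exact_mod_cast (by linarith : (1 : ℝ) < m)
  have hcont : Continuous fun t => freeEvolution m F t x :=
    (hF.continuous_freeEvolution hβ0 hβ).comp (continuous_id.prodMk continuous_const)
  simpa only [freeEvolution_zero hm] using hcont.tendsto 0

end MemCnR

lemma isACOn_of_hasDerivAt {E : Type*} [NormedAddCommGroup E] [NormedSpace ℝ E] [CompleteSpace E]
    {I : Set ℝ} (hI : I.OrdConnected) {g h : ℝ → E} (hh : Continuous h)
    (hderiv : ∀ t ∈ I, HasDerivAt g (h t) t) : IsACOn I g := by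
  refine ⟨h, hh.locallyIntegrable.locallyIntegrableOn I, fun s₁ hs₁ s₂ hs₂ _ => ?_⟩
  rw [intervalIntegral.integral_eq_sub_of_hasDerivAt
    (fun t ht => hderiv t (hI.uIcc_subset hs₁ hs₂ ht)) (hh.intervalIntegrable _ _)]

lemma MemCnR.memAC12_freeEvolution {m : ℕ} {β : ℝ} {F : ℝ → ℂ} (hF : MemCnR (m + 2) β F)
    (hβ0 : 0 ≤ β) (hβ : β + 1 < m) : MemAC12 (Ioi 0) (freeEvolution m F) := by
  have hF₁ : MemCnR (m + 1) β F := hF.of_le (m + 1).le_succ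
  have hF'' : MemCnR m β (deriv (deriv F)) := hF.deriv.deriv
  have hcont {G : ℝ → ℂ} (hG : MemCnR m β G) := hG.continuous_freeEvolution hβ0 hβ
  refine ⟨fun x => ?_, fun t _ => ⟨?_, ?_⟩⟩
  · exact isACOn_of_hasDerivAt ordConnected_Ioi
      (continuous_const.mul ((hcont hF'').comp (continuous_id.prodMk continuous_const)))
      fun t ht => hF.hasDerivAt_freeEvolution_time hβ0 hβ ht x
  · exact isACOn_of_hasDerivAt ordConnected_univ
      ((hcont hF₁.deriv).comp (continuous_const.prodMk continuous_id))
      fun x _ => hF₁.hasDerivAt_freeEvolution_space hβ0 hβ t x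
  · rw [funext fun x => (hF₁.hasDerivAt_freeEvolution_space hβ0 hβ t x).deriv]
    exact isACOn_of_hasDerivAt ordConnected_univ
      ((hcont hF'').comp (continuous_const.prodMk continuous_id))
      fun x _ => hF.deriv.hasDerivAt_freeEvolution_space hβ0 hβ t x

/-- the free particle.  For `F ∈ C^n(ℝ,r^β)` with `n ≥ 4` and `0 ≤ β < n-3`,
the function `Ψ(t,x) = (1/(2√(iπt))) · lim_{ε→0⁺} ∫_ℝ e^{-εy²} e^{i(y-x)²/(4t)} F(y) dy`
(principal complex square root) is a solution of the free Schrödinger equation in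
`AC_{1,2}((0,∞)×ℝ)` attaining the initial condition `F`. -/
theorem stmt19 (n : ℕ) (hn : 4 ≤ n) (β : ℝ) (hβ0 : 0 ≤ β) (hβ : β < (n : ℝ) - 3)
    (F : ℝ → ℂ) (hF : MemCnR n β F) :
    ∃ (Ψ : ℝ → ℝ → ℂ) (L : ℝ → ℝ → ℂ),
      (∀ t : ℝ, 0 < t → ∀ x : ℝ,
        Tendsto (fun ε : ℝ => ∫ y : ℝ,
            Complex.exp (-(ε : ℂ) * y ^ 2) *
              Complex.exp (Complex.I * ((y : ℂ) - x) ^ 2 / (4 * t)) * F y)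
          (𝓝[>] 0) (𝓝 (L t x)) ∧
        Ψ t x = 1 / (2 * (Complex.I * Real.pi * t) ^ ((1 : ℂ) / 2)) * L t x) ∧
      MemAC12 (Set.Ioi 0) Ψ ∧
      (∀ᵐ t ∂(volume : Measure ℝ), 0 < t → ∀ x : ℝ,
        Complex.I * deriv (fun τ => Ψ τ x) t = -(deriv (deriv (Ψ t)) x)) ∧
      ∀ x : ℝ, Tendsto (fun t => Ψ t x) (𝓝[>] 0) (𝓝 (F x)) := by
  obtain ⟨m, rfl⟩ : ∃ m, n = m + 2 := ⟨n - 2, by omega⟩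
  have hβm : β + 1 < m := by push_cast at hβ; linarith
  have hFm : MemCnR m β F := hF.of_le (m.le_add_right 2)
  refine ⟨freeEvolution m F,
    fun t x => 2 * (Complex.I * Real.pi * t) ^ ((1 : ℂ) / 2) * freeEvolution m F t x,
    fun t ht x => ⟨hFm.tendsto_integral_schrodingerKernel hβ0 hβm ht x, ?_⟩,
    hF.memAC12_freeEvolution hβ0 hβm,
    .of_forall fun t ht x => hF.schrodinger_freeEvolution hβ0 hβm ht x,
    fun x => (hFm.tendsto_freeEvolution_zero hβ0 hβm x).mono_left nhdsWithin_le_nhds⟩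
  have hroot : (Complex.I * Real.pi * t) ^ ((1 : ℂ) / 2) ≠ 0 := by
    simp [Complex.cpow_eq_zero_iff, ht.ne']
  field_simp
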